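/- Let H be the graph on five vertices obtained from the complete graph K_4 by subdividing exactly one edge (replacing one edge uv by a new vertex w adjacent to both u and v). Then H is 2-degenerate, has 5 vertices, and α_1(H) = 3; consequently α_1(2) ≤ 3/5 < 2/3. -/

import Mathlib

/-- The subgraph of `G` induced on `A` is `d`-degenerate: every nonempty (finite)
subset of `A` contains a vertex with at most `d` neighbours inside that subset. -/
def DegenOn {V : Type*} (G : SimpleGraph V) (d : ℕ) (A : Set V) : Prop :=
  ∀ S : Set V, S ⊆ A → S.Finite → S.Nonempty → ∃ v ∈ S, (S ∩ G.neighborSet v).ncard ≤ d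

/-- `G` is `d`-degenerate. -/
def Degen {V : Type*} (G : SimpleGraph V) (d : ℕ) : Prop :=
  DegenOn G d Set.univ

/-- `α_d(G)`: the maximum number of vertices of an induced `d`-degenerate subgraph of `G`. -/
noncomputable def alphaDeg {V : Type*} [Fintype V] (G : SimpleGraph V) (d : ℕ) : ℕ :=
  sSup {m : ℕ | ∃ A : Set V, DegenOn G d A ∧ A.ncard = m}

/-- `α_d(k)`: the infimum, over all finite simple graphs `G` of degeneracy exactly `k`,
of the ratio `α_d(G) / |V(G)|`. -/
noncomputable def alphaRatio (d k : ℕ) : ℝ :=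
  sInf {r : ℝ | ∃ (n : ℕ) (G : SimpleGraph (Fin n)),
    Degen G k ∧ ¬ Degen G (k - 1) ∧ r = (alphaDeg G d : ℝ) / (n : ℝ)}

/-- `K₄` with one edge subdivided: the vertices `0,1,2,3` form `K₄` minus the edge `01`,
and the new vertex `4` is adjacent to exactly `0` and `1`. -/
def subdividedK4 : SimpleGraph (Fin 5) :=
  SimpleGraph.fromRel (fun a b =>
    (a, b) ∈ [((0 : Fin 5), (2 : Fin 5)), (0, 3), (1, 2), (1, 3), (2, 3), (0, 4), (1, 4)])

/-!
Build the graph up in the layers `{2, 3}`, `{0, 1}`, `{4}`: each vertex has at most two neighbours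
in its own and the earlier layers, so the graph is 2-degenerate. Deleting any single vertex leaves
a triangle or a 4-cycle, so an induced forest omits at least two of the five vertices, while the
path `0 - 2 - 1` is an induced forest on three of them.
-/

open Finset

variable {V : Type*} {G : SimpleGraph V} {d : ℕ} {A B : Set V}

theorem DegenOn.mono (hAB : A ⊆ B) (hB : DegenOn G d B) : DegenOn G d A :=
  fun S hSA ↦ hB S (hSA.trans hAB)

theorem degenOn_of_encard_le {α : Type*} [LinearOrder α] (f : V → α)
    (h : ∀ v ∈ A, {w ∈ A | G.Adj v w ∧ f w ≤ f v}.encard ≤ d) : DegenOn G d A := by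
  intro S hSA hSfin hSne
  obtain ⟨v, hvS, hmax⟩ := S.exists_max_image f hSfin hSne
  have hsub : S ∩ G.neighborSet v ⊆ {w ∈ A | G.Adj v w ∧ f w ≤ f v} :=
    fun w hw ↦ ⟨hSA hw.1, hw.2, hmax w hw.1⟩
  have hle : (S ∩ G.neighborSet v).encard ≤ d := (Set.encard_le_encard hsub).trans (h v (hSA hvS))
  exact ⟨v, hvS, ENat.toNat_le_of_le_natCast hle⟩

theorem not_degenOn_of_forall_lt_card [DecidableRel G.Adj] {S : Finset V} (hSA : ↑S ⊆ A)
    (hS : S.Nonempty) (hdeg : ∀ v ∈ S, d < #{w ∈ S | G.Adj v w}) : ¬ DegenOn G d A := by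
  intro hA
  obtain ⟨v, hvS, hv⟩ := hA S hSA S.finite_toSet hS
  have hinter : (S : Set V) ∩ G.neighborSet v = ({w ∈ S | G.Adj v w} : Finset V) := by
    ext w
    simp
  rw [hinter, Set.ncard_coe_finset] at hv
  exact (hdeg v hvS).not_ge hv

section alphaDeg

variable [Fintype V]

theorem alphaDeg_le {m : ℕ} (h : ∀ A : Set V, DegenOn G d A → A.ncard ≤ m) :
    alphaDeg G d ≤ m := by
  refine csSup_le' ?_
  rintro _ ⟨A, hA, rfl⟩
  exact h A hA

theorem DegenOn.ncard_le_alphaDeg (hA : DegenOn G d A) : A.ncard ≤ alphaDeg G d := by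
  refine le_csSup ⟨Nat.card V, ?_⟩ ⟨A, hA, rfl⟩
  rintro _ ⟨B, -, rfl⟩
  exact B.ncard_le_card

theorem alphaDeg_le_card_sub_two (h : ∀ v, ¬ DegenOn G d {v}ᶜ) :
    alphaDeg G d ≤ Fintype.card V - 2 := by
  refine alphaDeg_le fun A hA ↦ ?_
  rcases isEmpty_or_nonempty V with _ | _
  · simp [A.eq_empty_of_isEmpty]
  have hcompl : 1 < Aᶜ.ncard := by
    by_contra! hle
    obtain ⟨v, hv⟩ := (Set.ncard_le_one_iff_subset_singleton).1 hle
    exact h v (hA.mono (Set.compl_subset_comm.1 hv))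
  have hsum := A.ncard_add_ncard_compl
  rw [Nat.card_eq_fintype_card] at hsum
  omega

end alphaDeg

theorem alphaRatio_le_alphaDeg_div {n k : ℕ} {G : SimpleGraph (Fin n)} (hk : Degen G k)
    (hk' : ¬ Degen G (k - 1)) : alphaRatio d k ≤ alphaDeg G d / n := by
  refine csInf_le ⟨0, ?_⟩ ⟨n, G, hk, hk', rfl⟩
  rintro _ ⟨m, H, -, -, rfl⟩
  positivity

namespace subdividedK4

instance : DecidableRel subdividedK4.Adj :=
  inferInstanceAs (DecidableRel (SimpleGraph.fromRel _).Adj)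

theorem degen_two : Degen subdividedK4 2 := by
  refine degenOn_of_encard_le ![1, 1, 0, 0, 2] fun v _ ↦ ?_
  rw [Set.encard_eq_coe_toFinset_card]
  norm_cast
  decide +revert

theorem degenOn_one_path : DegenOn subdividedK4 1 {0, 1, 2} := by
  refine degenOn_of_encard_le ![1, 1, 0, 0, 0] fun v hv ↦ ?_
  rw [Set.encard_eq_coe_toFinset_card]
  norm_cast
  decide +revert

theorem not_degenOn_one_compl_singleton (v : Fin 5) : ¬ DegenOn subdividedK4 1 {v}ᶜ := by
  obtain ⟨C, hvC, hC, hdeg⟩ : ∃ C : Finset (Fin 5), v ∉ C ∧ C.Nonempty ∧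
      ∀ u ∈ C, 1 < #{w ∈ C | subdividedK4.Adj u w} :=
    ⟨![{1, 2, 3}, {0, 2, 3}, {0, 3, 1, 4}, {0, 2, 1, 4}, {0, 2, 3}] v, by decide +revert⟩
  exact not_degenOn_of_forall_lt_card (Set.subset_compl_singleton_iff.2 hvC) hC hdeg

theorem not_degen_one : ¬ Degen subdividedK4 1 :=
  fun h ↦ not_degenOn_one_compl_singleton 0 (h.mono (Set.subset_univ _))

theorem alphaDeg_one : alphaDeg subdividedK4 1 = 3 := by
  refine le_antisymm (alphaDeg_le_card_sub_two not_degenOn_one_compl_singleton) ?_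
  calc 3 = ({0, 1, 2} : Set (Fin 5)).ncard := by simp
    _ ≤ alphaDeg subdividedK4 1 := degenOn_one_path.ncard_le_alphaDeg

end subdividedK4

theorem stmt_7 :
    Degen subdividedK4 2 ∧ Fintype.card (Fin 5) = 5 ∧ alphaDeg subdividedK4 1 = 3 ∧
    alphaRatio 1 2 ≤ 3 / 5 ∧ (3 / 5 : ℝ) < 2 / 3 := by
  have hratio : alphaRatio 1 2 ≤ 3 / 5 := by
    simpa [subdividedK4.alphaDeg_one] using
      alphaRatio_le_alphaDeg_div (d := 1) subdividedK4.degen_two subdividedK4.not_degen_one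
  exact ⟨subdividedK4.degen_two, Fintype.card_fin 5, subdividedK4.alphaDeg_one, hratio,
    by norm_num⟩
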